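/- For every integer d ≥ 2 there exists a constant C > 0, depending only on d, such that for all integers n ≥ 3 and all integers j with 2 ≤ j ≤ √n: | n·∫_{[0,1]^d} e^{−n|x|}·(n|x|)^j/j! dx − (log n)^{d−1}/(d−1)! | ≤ C·(log j)·(log n)^{d−2}, where for x ∈ [0,1]^d we write |x| := Π_{i=1}^d x⁽ⁱ⁾. -/

import Mathlib

open MeasureTheory Real

noncomputable section

/-!
The product of `d` independent uniform variables on `[0, 1]` has density
`(-log t) ^ (d - 1) / (d - 1)!`, so after the substitution `u = n t` the quantity to estimate is the
mean of `((log n - log U)⁺) ^ (d - 1) / (d - 1)!` for `U` with density `e⁻ᵘ uʲ / j!` on `(0, ∞)`.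
This `U` concentrates at `j`, and the integrand at `U = j` differs from
`(log n) ^ (d - 1) / (d - 1)!` by `O(log j (log n) ^ (d - 2))`. Fluctuations cost only powers of
`|log (U / j)|`, which are dominated by `U / j + j / U`, a variable of mean `2 + 1 / j`.
-/

open Set

lemma setLIntegral_comp_mul_right_Ioc (h : ℝ → ENNReal) (a b : ℝ) {t : ℝ} (ht : 0 < t) :
    ∫⁻ x in Ioc a b, h (x * t) = ENNReal.ofReal t⁻¹ * ∫⁻ s in Ioc (a * t) (b * t), h s := by
  have embedding := measurableEmbedding_mulRight₀ ht.ne'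
  have preimage : (· * t) ⁻¹' Ioc (a * t) (b * t) = Ioc a b := by
    rw [preimage_mul_const_Ioc₀ _ _ ht, mul_div_cancel_right₀ _ ht.ne',
      mul_div_cancel_right₀ _ ht.ne']
  rw [← preimage, ← embedding.lintegral_map, ← embedding.restrict_map,
    Real.map_volume_mul_right ht.ne', Measure.restrict_smul, lintegral_smul_measure,
    abs_of_pos (inv_pos.mpr ht), smul_eq_mul]

lemma lintegral_lintegral_Iic_swap {α : Type*} [LinearOrder α] [TopologicalSpace α]
    [OrderClosedTopology α] [SecondCountableTopology α] [MeasurableSpace α] [OpensMeasurableSpace α]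
    (μ : Measure α) [SFinite μ] {f : α → α → ENNReal} (hf : Measurable (Function.uncurry f)) :
    ∫⁻ t, ∫⁻ s in Iic t, f t s ∂μ ∂μ = ∫⁻ s, ∫⁻ t in Ici s, f t s ∂μ ∂μ := by
  simp_rw [← lintegral_indicator measurableSet_Iic, ← lintegral_indicator measurableSet_Ici]
  rw [lintegral_lintegral_swap]
  · rfl
  · exact (hf.indicator (measurableSet_le measurable_snd measurable_fst)).aemeasurable

lemma setLIntegral_setLIntegral_Ioc_swap {a b : ℝ} {f : ℝ → ℝ → ENNReal}
    (hf : Measurable (Function.uncurry f)) :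
    ∫⁻ t in Ioc a b, ∫⁻ s in Ioc a t, f t s = ∫⁻ s in Ioc a b, ∫⁻ t in Icc s b, f t s := by
  have swap := lintegral_lintegral_Iic_swap (volume.restrict (Ioc a b)) hf
  simp_rw [Measure.restrict_restrict measurableSet_Iic,
    Measure.restrict_restrict measurableSet_Ici] at swap
  convert swap using 1 <;> refine setLIntegral_congr_fun measurableSet_Ioc fun t ht ↦ ?_
  · have : Ioc a t = Iic t ∩ Ioc a b := by ext; grind
    simp only [this]
  · have : Icc t b = Ici t ∩ Ioc a b := by ext; grind
    simp only [this]

/-- The density on `(0, 1]` of the product of `m + 1` independent uniform random variables on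
`[0, 1]`. The index is shifted so that no truncated subtraction occurs. -/
def uniformProdPDF (m : ℕ) (t : ℝ) : ℝ := (-log t) ^ m / m.factorial

@[fun_prop]
lemma measurable_uniformProdPDF (m : ℕ) : Measurable (uniformProdPDF m) := by
  unfold uniformProdPDF
  fun_prop

lemma uniformProdPDF_nonneg (m : ℕ) {t : ℝ} (h0 : 0 ≤ t) (h1 : t ≤ 1) : 0 ≤ uniformProdPDF m t :=
  div_nonneg (pow_nonneg (neg_nonneg.mpr (log_nonpos h0 h1)) m) (by positivity)

lemma hasDerivAt_uniformProdPDF_succ (m : ℕ) {t : ℝ} (ht : t ≠ 0) :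
    HasDerivAt (uniformProdPDF (m + 1)) (-(t⁻¹ * uniformProdPDF m t)) t := by
  refine (((hasDerivAt_log ht).neg.pow (m + 1)).div_const _).congr_deriv ?_
  simp only [uniformProdPDF, Nat.factorial_succ, Pi.neg_apply, Nat.add_sub_cancel]
  push_cast
  field_simp

lemma setLIntegral_Icc_inv_mul_uniformProdPDF (m : ℕ) {s : ℝ} (h0 : 0 < s) (h1 : s ≤ 1) :
    ∫⁻ t in Icc s 1, ENNReal.ofReal (t⁻¹ * uniformProdPDF m t) =
      ENNReal.ofReal (uniformProdPDF (m + 1) s) := by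
  have pos {t : ℝ} (ht : t ∈ Icc s 1) : 0 < t := h0.trans_le ht.1
  have continuousOn : ContinuousOn (fun t ↦ t⁻¹ * uniformProdPDF m t) (Icc s 1) :=
    (continuousOn_id.inv₀ fun t ht ↦ (pos ht).ne').mul
      (((continuousOn_id.log fun t ht ↦ (pos ht).ne').neg.pow m).div_const _)
  have integral_eq : ∫ t in s..1, t⁻¹ * uniformProdPDF m t = uniformProdPDF (m + 1) s := by
    have ftc := intervalIntegral.integral_eq_sub_of_hasDerivAt
      (f := fun t ↦ -uniformProdPDF (m + 1) t) (a := s) (b := 1)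
      (fun t ht ↦ (hasDerivAt_uniformProdPDF_succ m
        (pos (uIcc_of_le h1 ▸ ht)).ne').neg.congr_deriv (neg_neg _))
      (continuousOn.intervalIntegrable_of_Icc h1)
    simpa [uniformProdPDF] using ftc
  rw [← integral_eq, intervalIntegral.integral_of_le h1, ← integral_Icc_eq_integral_Ioc,
    ofReal_integral_eq_lintegral_ofReal continuousOn.integrableOn_Icc]
  refine (ae_restrict_iff' measurableSet_Icc).2 (.of_forall fun t ht ↦ ?_)
  exact mul_nonneg (inv_nonneg.mpr (pos ht).le) (uniformProdPDF_nonneg m (pos ht).le ht.2)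

lemma setLIntegral_setLIntegral_uniformProdPDF (m : ℕ) {h : ℝ → ENNReal} (hh : Measurable h) :
    ∫⁻ x in Ioc 0 1, ∫⁻ t in Ioc 0 1, ENNReal.ofReal (uniformProdPDF m t) * h (x * t) =
      ∫⁻ s in Ioc 0 1, ENNReal.ofReal (uniformProdPDF (m + 1) s) * h s := by
  calc
    _ = ∫⁻ t in Ioc 0 1, ∫⁻ x in Ioc 0 1, ENNReal.ofReal (uniformProdPDF m t) * h (x * t) :=
      lintegral_lintegral_swap (by fun_prop)
    _ = ∫⁻ t in Ioc 0 1, ∫⁻ s in Ioc 0 t, ENNReal.ofReal (t⁻¹ * uniformProdPDF m t) * h s := by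
      refine setLIntegral_congr_fun measurableSet_Ioc fun t ht ↦ ?_
      rw [lintegral_const_mul _ (by fun_prop), lintegral_const_mul _ hh,
        setLIntegral_comp_mul_right_Ioc h 0 1 ht.1, zero_mul, one_mul,
        ENNReal.ofReal_mul (inv_nonneg.mpr ht.1.le)]
      ring
    _ = ∫⁻ s in Ioc 0 1, ∫⁻ t in Icc s 1, ENNReal.ofReal (t⁻¹ * uniformProdPDF m t) * h s :=
      setLIntegral_setLIntegral_Ioc_swap (by fun_prop)
    _ = _ := by
      refine setLIntegral_congr_fun measurableSet_Ioc fun s hs ↦ ?_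
      rw [lintegral_mul_const _ (by fun_prop),
        setLIntegral_Icc_inv_mul_uniformProdPDF m hs.1 hs.2]

lemma lintegral_pi_comp_prod (m : ℕ) {h : ℝ → ENNReal} (hh : Measurable h) :
    ∫⁻ x, h (∏ i, x i) ∂(Measure.pi fun _ : Fin (m + 1) ↦ volume.restrict (Ioc 0 1)) =
      ∫⁻ t in Ioc 0 1, ENNReal.ofReal (uniformProdPDF m t) * h t := by
  induction m generalizing h with
  | zero =>
    simpa [uniformProdPDF] using!
      (measurePreserving_funUnique (volume.restrict (Ioc (0 : ℝ) 1)) (Fin 1)).lintegral_comp_emb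
        (MeasurableEquiv.funUnique (Fin 1) ℝ).measurableEmbedding h
  | succ m ih =>
    set μ : Measure ℝ := volume.restrict (Ioc 0 1)
    calc
      _ = ∫⁻ p, h (p.1 * ∏ i, p.2 i) ∂(μ.prod (Measure.pi fun _ : Fin (m + 1) ↦ μ)) := by
        simp_rw [Fin.prod_univ_succ (n := m + 1)]
        exact (measurePreserving_piFinSuccAbove (fun _ : Fin (m + 2) ↦ μ) 0).lintegral_comp_emb
          (MeasurableEquiv.measurableEmbedding _)
          (fun p : ℝ × (Fin (m + 1) → ℝ) ↦ h (p.1 * ∏ i, p.2 i))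
      _ = ∫⁻ x, ∫⁻ y, h (x * ∏ i, y i) ∂(Measure.pi fun _ : Fin (m + 1) ↦ μ) ∂μ :=
        lintegral_prod _ (by fun_prop)
      _ = ∫⁻ x, ∫⁻ t, ENNReal.ofReal (uniformProdPDF m t) * h (x * t) ∂μ ∂μ :=
        lintegral_congr fun x ↦ ih (h := fun t ↦ h (x * t)) (by fun_prop)
      _ = _ := setLIntegral_setLIntegral_uniformProdPDF m hh

lemma volume_restrict_Icc_zero_one_eq_pi (ι : Type*) [Fintype ι] :
    (volume : Measure (ι → ℝ)).restrict (Icc 0 1) =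
      Measure.pi fun _ ↦ volume.restrict (Ioc (0 : ℝ) 1) := by
  rw [← pi_univ_Icc, volume_pi, Measure.restrict_pi_pi]
  simp only [Pi.zero_apply, Pi.one_apply, Measure.restrict_congr_set Ioc_ae_eq_Icc]

lemma map_prod_volume_restrict_Icc (m : ℕ) :
    ((volume : Measure (Fin (m + 1) → ℝ)).restrict (Icc 0 1)).map (fun x ↦ ∏ i, x i) =
      (volume.restrict (Ioc 0 1)).withDensity fun t ↦ ENNReal.ofReal (uniformProdPDF m t) := by
  refine Measure.ext_of_lintegral _ fun h hh ↦ ?_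
  rw [lintegral_map hh (by fun_prop), volume_restrict_Icc_zero_one_eq_pi,
    lintegral_pi_comp_prod m hh, lintegral_withDensity_eq_lintegral_mul _ (by fun_prop) hh]
  rfl

lemma setIntegral_Icc_comp_prod {E : Type*} [NormedAddCommGroup E] [NormedSpace ℝ E] (m : ℕ)
    {h : ℝ → E} (hh : StronglyMeasurable h) :
    ∫ x in Icc (0 : Fin (m + 1) → ℝ) 1, h (∏ i, x i) =
      ∫ t in Ioc 0 1, uniformProdPDF m t • h t := by
  rw [← integral_map (φ := fun x : Fin (m + 1) → ℝ ↦ ∏ i, x i)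
      (by fun_prop) hh.aestronglyMeasurable, map_prod_volume_restrict_Icc,
    integral_withDensity_eq_integral_toReal_smul (by fun_prop) (by simp)]
  refine setIntegral_congr_fun measurableSet_Ioc fun t ht ↦ ?_
  simp only [ENNReal.toReal_ofReal (uniformProdPDF_nonneg m ht.1.le ht.2)]

lemma mul_setIntegral_Icc_comp_mul_prod (m : ℕ) {n : ℝ} (hn : 0 < n) {g : ℝ → ℝ}
    (hg : Measurable g) :
    n * ∫ x in Icc (0 : Fin (m + 2) → ℝ) 1, g (n * ∏ i, x i) =
      ∫ u in Ioi 0, g u * (max (log n - log u) 0 ^ (m + 1) / (m + 1).factorial) := by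
  set F : ℝ → ℝ := fun u ↦ g u * (max (log n - log u) 0 ^ (m + 1) / (m + 1).factorial)
  have density_smul {t : ℝ} (ht : t ∈ Ioc 0 1) :
      uniformProdPDF (m + 1) t • g (n * t) = F (n * t) := by
    have : log n - log (n * t) = -log t := by rw [log_mul hn.ne' ht.1.ne']; ring
    simp only [F, this, max_eq_left (neg_nonneg.mpr (log_nonpos ht.1.le ht.2)), uniformProdPDF,
      smul_eq_mul, mul_comm]
  have eq_zero_of_gt {u : ℝ} (hu : n < u) : F u = 0 := by
    simp [F, max_eq_right (sub_nonpos.mpr (log_le_log hn hu.le))]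
  calc
    _ = n * ∫ t in Ioc 0 1, F (n * t) := by
      rw [setIntegral_Icc_comp_prod (m + 1) (h := fun t ↦ g (n * t))
          (hg.comp (by fun_prop)).stronglyMeasurable,
        setIntegral_congr_fun measurableSet_Ioc fun t ht ↦ density_smul ht]
    _ = ∫ u in Ioc 0 n, F u := by
      rw [← intervalIntegral.integral_of_le zero_le_one,
        intervalIntegral.mul_integral_comp_mul_left, mul_zero, mul_one,
        intervalIntegral.integral_of_le hn.le]
    _ = _ := (setIntegral_eq_of_subset_of_forall_sdiff_eq_zero measurableSet_Ioi
      Ioc_subset_Ioi_self fun u hu ↦ eq_zero_of_gt (by grind)).symm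

section PoissonWeight

/-- The probability `e⁻ᵘ uˢ / s!` that a Poisson variable of mean `u` equals `s`, extended to real
`s` through `s! = Γ (s + 1)`. As a function of `u` it is a probability density on `(0, ∞)`. -/
def poissonWeight (s u : ℝ) : ℝ := exp (-u) * u ^ s / Gamma (s + 1)

@[fun_prop]
lemma measurable_poissonWeight (s : ℝ) : Measurable (poissonWeight s) := by
  unfold poissonWeight
  fun_prop

variable {s u : ℝ}

lemma poissonWeight_nonneg (hs : -1 < s) (hu : 0 ≤ u) : 0 ≤ poissonWeight s u :=
  div_nonneg (by positivity) (Gamma_pos_of_pos (by linarith)).le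

lemma integrableOn_poissonWeight (hs : -1 < s) : IntegrableOn (poissonWeight s) (Ioi 0) := by
  have := GammaIntegral_convergent (s := s + 1) (by linarith)
  rw [add_sub_cancel_right] at this
  exact this.div_const _

lemma integral_poissonWeight (hs : -1 < s) : ∫ u in Ioi 0, poissonWeight s u = 1 := by
  have hs' : 0 < s + 1 := by linarith
  have := Gamma_eq_integral hs'
  rw [add_sub_cancel_right] at this
  simp only [poissonWeight]
  rw [integral_div, ← this, div_self (Gamma_pos_of_pos hs').ne']

lemma poissonWeight_mul_div_add_div (hs : 0 < s) (hu : 0 < u) :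
    poissonWeight s u * (u / s + s / u) =
      (1 + 1 / s) * poissonWeight (s + 1) u + poissonWeight (s - 1) u := by
  have := Gamma_pos_of_pos hs
  simp only [poissonWeight, sub_add_cancel, Gamma_add_one (by positivity : s + 1 ≠ 0),
    Gamma_add_one hs.ne', rpow_add_one hu.ne', rpow_sub_one hu.ne']
  field_simp

lemma integrableOn_poissonWeight_mul_div_add_div (hs : 0 < s) :
    IntegrableOn (fun u ↦ poissonWeight s u * (u / s + s / u)) (Ioi 0) :=
  IntegrableOn.congr_fun
    (((integrableOn_poissonWeight (by linarith)).const_mul _).add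
      (integrableOn_poissonWeight (by linarith)))
    (fun _ hu ↦ (poissonWeight_mul_div_add_div hs hu).symm) measurableSet_Ioi

lemma integral_poissonWeight_mul_div_add_div (hs : 0 < s) :
    ∫ u in Ioi 0, poissonWeight s u * (u / s + s / u) = 2 + 1 / s := by
  rw [setIntegral_congr_fun measurableSet_Ioi fun u hu ↦ poissonWeight_mul_div_add_div hs hu,
    integral_add ((integrableOn_poissonWeight (by linarith)).const_mul _)
      (integrableOn_poissonWeight (by linarith)),
    integral_const_mul, integral_poissonWeight (by linarith), integral_poissonWeight (by linarith)]
  ring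

lemma abs_integral_poissonWeight_mul_sub_le (hs : 0 < s) {f : ℝ → ℝ} (hf : Measurable f) {c K : ℝ}
    (hfc : ∀ u, 0 < u → |f u - c| ≤ K * (u / s + s / u)) :
    |(∫ u in Ioi 0, poissonWeight s u * f u) - c| ≤ K * (2 + 1 / s) := by
  set bound : ℝ → ℝ := fun u ↦ K * (poissonWeight s u * (u / s + s / u))
  have bound_integrable : IntegrableOn bound (Ioi 0) :=
    (integrableOn_poissonWeight_mul_div_add_div hs).const_mul K
  have norm_le : ∀ᵐ u ∂volume.restrict (Ioi 0), ‖poissonWeight s u * (f u - c)‖ ≤ bound u := by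
    refine (ae_restrict_iff' measurableSet_Ioi).2 (.of_forall fun u (hu : 0 < u) ↦ ?_)
    have weight_nonneg := poissonWeight_nonneg (s := s) (by linarith) hu.le
    calc
      _ = poissonWeight s u * |f u - c| := by
        rw [norm_mul, norm_eq_abs, norm_eq_abs, abs_of_nonneg weight_nonneg]
      _ ≤ poissonWeight s u * (K * (u / s + s / u)) := by gcongr; exact hfc u hu
      _ = bound u := mul_left_comm ..
  have diff_integrable : IntegrableOn (fun u ↦ poissonWeight s u * (f u - c)) (Ioi 0) :=
    bound_integrable.mono' (by fun_prop) norm_le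
  have integral_diff : (∫ u in Ioi 0, poissonWeight s u * f u) - c =
      ∫ u in Ioi 0, poissonWeight s u * (f u - c) := by
    have split (u : ℝ) :
        poissonWeight s u * f u = poissonWeight s u * (f u - c) + poissonWeight s u * c := by ring
    simp_rw [split]
    rw [integral_add diff_integrable ((integrableOn_poissonWeight (by linarith)).mul_const c),
      integral_mul_const, integral_poissonWeight (by linarith), one_mul, add_sub_cancel_right]
  rw [integral_diff, ← integral_poissonWeight_mul_div_add_div hs, ← integral_const_mul]
  exact norm_integral_le_of_norm_le bound_integrable norm_le

end PoissonWeight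

lemma one_add_abs_log_pow_le {x : ℝ} (hx : 0 < x) (k : ℕ) :
    (1 + |log x|) ^ k ≤ k.factorial * exp 1 * (x + x⁻¹) := by
  have pow_le := pow_div_factorial_le_exp (1 + |log x|) (by positivity) k
  rw [div_le_iff₀' (by positivity), exp_add, ← mul_assoc] at pow_le
  have exp_le := exp_abs_le (log x)
  rw [exp_neg, exp_log hx] at exp_le
  exact pow_le.trans (by gcongr)

lemma abs_max_sub_log_pow_sub_pow_le (m : ℕ) {L s u : ℝ} (hL : 1 ≤ L) (hs : 2 ≤ s) (hu : 0 < u) :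
    |max (L - log u) 0 ^ (m + 1) - L ^ (m + 1)| ≤
      (m + 1) * (2 * log s * L ^ m) * (1 + |log (u / s)|) ^ (m + 1) := by
  have log_s : 1 / 2 ≤ log s := by
    linarith [log_two_gt_d9, log_le_log two_pos hs]
  set y := |log (u / s)|
  have log_u : log u = log s + log (u / s) := by
    rw [log_div hu.ne' (by positivity)]; ring
  have y_nonneg : 0 ≤ y := abs_nonneg _
  have abs_sub_le : |max (L - log u) 0 - L| ≤ 2 * log s * (1 + y) := by
    calc
      _ = |max (L - log u) 0 - max L 0| := by rw [max_eq_left (by linarith : 0 ≤ L)]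
      _ ≤ |L - log u - L| := abs_max_sub_max_le_abs _ _ _
      _ ≤ log s + y := by
        rw [sub_sub_cancel_left, abs_neg, log_u]
        exact (abs_add_le _ _).trans_eq (by rw [abs_of_pos (by linarith)])
      _ ≤ _ := by nlinarith
  -- As `log s ≥ 0`, the truncated difference is at most `L + y` however large `s` is.
  have max_abs_le : max |max (L - log u) 0| |L| ≤ L * (1 + y) := by
    have : -log (u / s) ≤ y := neg_le_abs _
    rw [abs_of_nonneg (le_max_right _ _), abs_of_pos (by linarith)]
    refine max_le (max_le ?_ ?_) ?_ <;> nlinarith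
  calc
    _ ≤ |max (L - log u) 0 - L| * (m + 1 : ℕ) * max |max (L - log u) 0| |L| ^ m :=
      abs_pow_sub_pow_le _ _ _
    _ ≤ 2 * log s * (1 + y) * (m + 1 : ℕ) * (L * (1 + y)) ^ m := by gcongr
    _ = _ := by rw [mul_pow]; push_cast; ring

theorem stmt15_general {d : ℕ} (hd : 2 ≤ d) :
    ∃ C : ℝ, 0 < C ∧ ∀ n s : ℝ, exp 1 ≤ n → 2 ≤ s →
      |n * (∫ x in Icc (0 : Fin d → ℝ) 1,
            exp (-(n * ∏ i, x i)) * (n * ∏ i, x i) ^ s / Gamma (s + 1)) -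
          log n ^ (d - 1) / (d - 1).factorial| ≤
        C * log s * log n ^ (d - 2) := by
  obtain ⟨m, rfl⟩ := Nat.exists_eq_add_of_le' hd
  refine ⟨6 * (m + 1) * exp 1, by positivity, fun n s hn hs ↦ ?_⟩
  have n_pos : 0 < n := (exp_pos 1).trans_le hn
  have log_n : 1 ≤ log n := (le_log_iff_exp_le n_pos).2 hn
  have log_s : 0 ≤ log s := log_nonneg (by linarith)
  have reduction := mul_setIntegral_Icc_comp_mul_prod m n_pos (measurable_poissonWeight s)
  have estimate := abs_integral_poissonWeight_mul_sub_le (s := s) (by linarith)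
    (f := fun u ↦ max (log n - log u) 0 ^ (m + 1) / (m + 1).factorial) (by fun_prop)
    (c := log n ^ (m + 1) / (m + 1).factorial) (K := (m + 1) * (2 * log s * log n ^ m) * exp 1)
    fun u hu ↦ by
      rw [← sub_div, abs_div, Nat.abs_cast, div_le_iff₀ (by positivity)]
      refine (abs_max_sub_log_pow_sub_pow_le m log_n hs hu).trans ?_
      grw [one_add_abs_log_pow_le (by positivity), inv_div]
      exact le_of_eq (by ring)
  rw [← reduction] at estimate
  refine estimate.trans ?_
  have : 1 / s ≤ 1 := (div_le_one (by linarith)).2 (by linarith)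
  calc
    _ ≤ (m + 1) * (2 * log s * log n ^ m) * exp 1 * (2 + 1) := by gcongr
    _ = 6 * (m + 1) * exp 1 * log s * log n ^ m := by ring

theorem stmt15 {d : ℕ} (hd : 2 ≤ d) :
    ∃ C : ℝ, 0 < C ∧ ∀ n j : ℕ, 3 ≤ n → 2 ≤ j → (j : ℝ) ≤ Real.sqrt n →
      |(n : ℝ) * (∫ x in Set.Icc (0 : Fin d → ℝ) 1,
            Real.exp (-((n : ℝ) * ∏ i, x i)) * ((n : ℝ) * ∏ i, x i) ^ j /
              (Nat.factorial j : ℝ)) -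
          (Real.log n) ^ (d - 1) / (Nat.factorial (d - 1) : ℝ)| ≤
        C * Real.log j * (Real.log n) ^ (d - 2) := by
  obtain ⟨C, hC, bound⟩ := stmt15_general hd
  refine ⟨C, hC, fun n j hn hj _ ↦ ?_⟩
  have exp_one_le : exp 1 ≤ n := exp_one_lt_three.le.trans (mod_cast hn)
  simpa only [rpow_natCast, Gamma_nat_eq_factorial] using bound n j exp_one_le (mod_cast hj)
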